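/- Suppose μ, ν are finite nonnegative Borel measures on ℝ^N and there exists S > 0 such that for every smooth compactly supported φ, S·(∫|φ|^{p*} dν)^{p/p*} ≤ ∫|φ|^p dμ, where 1 ≤ p < p*. Then there exist an at most countable set of points {x_i} and nonnegative numbers ν_i with ν = (absolutely continuous/diffuse part) + Σ_i ν_i δ_{x_i}, where the atomic part of ν is carried by countably many atoms, and for each atom S·ν_i^{p/p*} ≤ μ({x_i}). -/

import Mathlib

open MeasureTheory ENNReal

theorem mul_measure_singleton_rpow_le {E : Type*} [NormedAddCommGroup E] [NormedSpace ℝ E]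
    [FiniteDimensional ℝ E] [MeasurableSpace E] [BorelSpace E] {p q : ℝ} (hp : 0 < p) (hq : 0 < q)
    (C : ℝ≥0∞) (μ ν : Measure E) [IsFiniteMeasure μ]
    (h : ∀ φ : E → ℝ, ContDiff ℝ (⊤ : ℕ∞) φ → HasCompactSupport φ →
      C * (∫⁻ x, ENNReal.ofReal (|φ x| ^ q) ∂ν) ^ (p / q) ≤ ∫⁻ x, ENNReal.ofReal (|φ x| ^ p) ∂μ)
    (x : E) : C * ν {x} ^ (p / q) ≤ μ {x} := by
  refine le_of_forall_gt fun r hr ↦ ?_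
  obtain ⟨U, hxU, hU, hUr⟩ := Set.exists_isOpen_lt_of_lt {x} r hr
  obtain ⟨f, hfU, hfc, hf, hf01, hfx⟩ :=
    exists_contDiff_tsupport_subset (n := (⊤ : ℕ∞)) (hU.mem_nhds (Set.singleton_subset_iff.1 hxU))
  refine lt_of_le_of_lt ?_ hUr
  calc C * ν {x} ^ (p / q)
      ≤ C * (∫⁻ y, ENNReal.ofReal (|f y| ^ q) ∂ν) ^ (p / q) := by
        gcongr
        calc ν {x} = ∫⁻ y in {x}, ENNReal.ofReal (|f y| ^ q) ∂ν := by
              simp [hfx]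
          _ ≤ _ := setLIntegral_le_lintegral _ _
    _ ≤ ∫⁻ y, ENNReal.ofReal (|f y| ^ p) ∂μ := h f hf hfc
    _ ≤ ∫⁻ y, U.indicator 1 y ∂μ := by
        refine lintegral_mono fun y ↦ ?_
        by_cases hy : y ∈ U
        · have hfy := hf01 (Set.mem_range_self y)
          simpa [hy] using
            Real.rpow_le_one (abs_nonneg _) (abs_le.2 ⟨by linarith [hfy.1], hfy.2⟩) hp.le
        · simp [image_eq_zero_of_notMem_tsupport fun hy' ↦ hy (hfU hy'), hp.ne']
    _ = μ U := lintegral_indicator_one hU.measurableSet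

theorem stmt_14 (N : ℕ) (p pstar S : ℝ) (hp : 1 ≤ p) (hpp : p < pstar) (hS : 0 < S)
    (μ ν : Measure (EuclideanSpace ℝ (Fin N))) [IsFiniteMeasure μ] [IsFiniteMeasure ν]
    (hyp : ∀ φ : EuclideanSpace ℝ (Fin N) → ℝ, ContDiff ℝ (⊤ : ℕ∞) φ → HasCompactSupport φ →
      ENNReal.ofReal S * (∫⁻ x, ENNReal.ofReal (|φ x| ^ pstar) ∂ν) ^ (p / pstar) ≤
        ∫⁻ x, ENNReal.ofReal (|φ x| ^ p) ∂μ) :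
    ∃ D : Set (EuclideanSpace ℝ (Fin N)), D.Countable ∧
      (∀ x ∉ D, ν {x} = 0) ∧
      ∀ x ∈ D, ENNReal.ofReal S * (ν {x}) ^ (p / pstar) ≤ μ {x} := by
  refine ⟨{x | 0 < ν {x}}, ?_, fun x hx ↦ by simpa using hx, fun x _ ↦
    mul_measure_singleton_rpow_le (by linarith) (by linarith) _ μ ν hyp x⟩
  exact Measure.countable_meas_pos_of_disjoint_iUnion (fun x ↦ measurableSet_singleton x)
    fun x y hxy ↦ by simpa [Function.onFun] using hxy
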